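/- arXiv:1709.10030 — 3 statements merged into one kernel-verified Lean document; each statement's English description precedes it below -/
import Mathlib

section
/- Let n be a positive integer, let Y ∈ ℝ^n, let γ > 0, let f be a positive integer, let v₁, …, v_f ∈ ℝ^n be a family of feature vectors, and let S ⊆ {1, …, f}. Then the minimum, over all w ∈ ℝ^f whose support is contained in S, of (1/2)‖Y − Σ_{j∈S} w_j v_j‖² + (1/(2γ)) Σ_{j∈S} w_j², equals (1/2) Yᵀ (I_n + γ Σ_{j∈S} v_j v_jᵀ)⁻¹ Y. -/
open Matrix

/-!
Let `M = 1 + γ ∑ v_j v_jᵀ` and `M u = Y`. Completing the square twice, once around the residual `u`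
and once around the coefficients `γ (v_j ⬝ u)`, writes the ridge objective at `w` as
`(1/2) (Y ⬝ u)` plus two sums of squares. Both sums vanish at `w_j = γ (v_j ⬝ u)`, because `M u = Y`
says precisely that the residual of these coefficients is `u`.
-/

section Ridge

variable {ι m K : Type*} [Fintype m]

/-- The regularized second-moment matrix `1 + γ ∑_{j ∈ S} v_j v_jᵀ`, whose inverse gives the minimum
of the ridge objective. -/
def ridgeMatrix [DecidableEq m] [CommRing K] (v : ι → m → K) (γ : K) (S : Finset ι) :
    Matrix m m K :=
  1 + γ • ∑ j ∈ S, vecMulVec (v j) (v j)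

/-- The ridge regression objective `(1/2) ‖Y - ∑_{j ∈ S} w_j v_j‖² + (1/(2γ)) ∑_{j ∈ S} w_j²`, with
the squared Euclidean norm encoded as a dot product. -/
def ridgeObjective [Field K] (v : ι → m → K) (γ : K) (Y : m → K) (S : Finset ι) (w : ι → K) : K :=
  (1 / 2) * ((Y - ∑ j ∈ S, w j • v j) ⬝ᵥ (Y - ∑ j ∈ S, w j • v j)) +
    (1 / (2 * γ)) * ∑ j ∈ S, w j ^ 2

section CommRing

variable [CommRing K]

theorem sub_dotProduct_sub_self (x y : m → K) :
    (x - y) ⬝ᵥ (x - y) = x ⬝ᵥ x - 2 * (x ⬝ᵥ y) + y ⬝ᵥ y := by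
  rw [sub_dotProduct, dotProduct_sub, dotProduct_sub, dotProduct_comm y x]
  ring

theorem sum_smul_dotProduct (S : Finset ι) (w : ι → K) (v : ι → m → K) (x : m → K) :
    (∑ j ∈ S, w j • v j) ⬝ᵥ x = ∑ j ∈ S, w j * (v j ⬝ᵥ x) := by
  simp only [sum_dotProduct, smul_dotProduct, smul_eq_mul]

variable [DecidableEq m] (v : ι → m → K) (γ : K) (S : Finset ι) (x : m → K)

theorem ridgeMatrix_mulVec :
    ridgeMatrix v γ S *ᵥ x = x + ∑ j ∈ S, (γ * (v j ⬝ᵥ x)) • v j := by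
  simp only [ridgeMatrix, add_mulVec, one_mulVec, smul_mulVec, sum_mulVec, vecMulVec_mulVec,
    op_smul_eq_smul, Finset.smul_sum, smul_smul]

theorem ridgeMatrix_mulVec_dotProduct_self :
    (ridgeMatrix v γ S *ᵥ x) ⬝ᵥ x = x ⬝ᵥ x + γ * ∑ j ∈ S, (v j ⬝ᵥ x) ^ 2 := by
  simp only [ridgeMatrix_mulVec, add_dotProduct, sum_smul_dotProduct, Finset.mul_sum, mul_assoc, sq]

end CommRing

section Field

variable [DecidableEq m] [Field K] {v : ι → m → K} {γ : K} {Y u : m → K} {S : Finset ι}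

theorem ridgeObjective_eq_add_squares [NeZero (2 : K)] (hγ : γ ≠ 0)
    (hu : ridgeMatrix v γ S *ᵥ u = Y) (w : ι → K) :
    ridgeObjective v γ Y S w = (1 / 2) * (Y ⬝ᵥ u) +
      (1 / 2) * ((Y - ∑ j ∈ S, w j • v j - u) ⬝ᵥ (Y - ∑ j ∈ S, w j • v j - u)) +
      (1 / (2 * γ)) * ∑ j ∈ S, (w j - γ * (v j ⬝ᵥ u)) ^ 2 := by
  have dot_Y : Y ⬝ᵥ u = u ⬝ᵥ u + γ * ∑ j ∈ S, (v j ⬝ᵥ u) ^ 2 :=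
    hu ▸ ridgeMatrix_mulVec_dotProduct_self v γ S u
  have dot_residual :
      (Y - ∑ j ∈ S, w j • v j) ⬝ᵥ u = Y ⬝ᵥ u - ∑ j ∈ S, w j * (v j ⬝ᵥ u) := by
    rw [sub_dotProduct, sum_smul_dotProduct]
  have sum_sq : ∑ j ∈ S, (w j - γ * (v j ⬝ᵥ u)) ^ 2 =
      ∑ j ∈ S, w j ^ 2 - 2 * γ * ∑ j ∈ S, w j * (v j ⬝ᵥ u) +
        γ ^ 2 * ∑ j ∈ S, (v j ⬝ᵥ u) ^ 2 := by
    simp only [Finset.mul_sum, ← Finset.sum_sub_distrib, ← Finset.sum_add_distrib]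
    exact Finset.sum_congr rfl fun j _ ↦ by ring
  rw [ridgeObjective, sub_dotProduct_sub_self _ u, dot_residual, sum_sq, dot_Y]
  field_simp
  ring

theorem ridgeObjective_eq_half_dotProduct [NeZero (2 : K)] (hγ : γ ≠ 0)
    (hu : ridgeMatrix v γ S *ᵥ u = Y) {w : ι → K} (hw : ∀ j ∈ S, w j = γ * (v j ⬝ᵥ u)) :
    ridgeObjective v γ Y S w = (1 / 2) * (Y ⬝ᵥ u) := by
  have residual_eq : Y - ∑ j ∈ S, w j • v j = u := by
    rw [Finset.sum_congr rfl fun j hj ↦ by rw [hw j hj], ← hu, ridgeMatrix_mulVec,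
      add_sub_cancel_right]
  have sum_sq_eq_zero : ∑ j ∈ S, (w j - γ * (v j ⬝ᵥ u)) ^ 2 = 0 :=
    Finset.sum_eq_zero fun j hj ↦ by rw [hw j hj, sub_self, zero_pow two_ne_zero]
  rw [ridgeObjective_eq_add_squares hγ hu, residual_eq, sum_sq_eq_zero, sub_self,
    dotProduct_zero, mul_zero, mul_zero, add_zero, add_zero]

variable [LinearOrder K] [IsStrictOrderedRing K]

theorem half_dotProduct_le_ridgeObjective (hγ : 0 < γ) (hu : ridgeMatrix v γ S *ᵥ u = Y)
    (w : ι → K) : (1 / 2) * (Y ⬝ᵥ u) ≤ ridgeObjective v γ Y S w := by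
  have residual_sq_nonneg :
      0 ≤ (Y - ∑ j ∈ S, w j • v j - u) ⬝ᵥ (Y - ∑ j ∈ S, w j • v j - u) :=
    Finset.sum_nonneg fun i _ ↦ mul_self_nonneg _
  rw [ridgeObjective_eq_add_squares hγ.ne' hu, add_assoc]
  exact le_add_of_nonneg_right (by positivity)

theorem isUnit_ridgeMatrix (hγ : 0 ≤ γ) : IsUnit (ridgeMatrix v γ S) := by
  rw [← mulVec_injective_iff_isUnit, ← coe_mulVecLin, injective_iff_map_eq_zero]
  intro x hx
  have quadratic_eq_zero : x ⬝ᵥ x + γ * ∑ j ∈ S, (v j ⬝ᵥ x) ^ 2 = 0 := by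
    rw [← ridgeMatrix_mulVec_dotProduct_self, ← mulVecLin_apply, hx, zero_dotProduct]
  have dotProduct_nonneg : 0 ≤ x ⬝ᵥ x := Finset.sum_nonneg fun i _ ↦ mul_self_nonneg _
  have penalty_nonneg : 0 ≤ γ * ∑ j ∈ S, (v j ⬝ᵥ x) ^ 2 := by positivity
  exact dotProduct_self_eq_zero.mp (by linarith)

theorem ridge_min_value_support_general (v : ι → m → K) (hγ : 0 < γ) (Y : m → K) (S : Finset ι) :
    IsLeast (ridgeObjective v γ Y S '' {w | ∀ j ∉ S, w j = 0})
      ((1 / 2) * (Y ⬝ᵥ ((ridgeMatrix v γ S)⁻¹ *ᵥ Y))) := by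
  classical
  set u := (ridgeMatrix v γ S)⁻¹ *ᵥ Y with u_def
  have hu : ridgeMatrix v γ S *ᵥ u = Y := by
    rw [u_def, mulVec_mulVec,
      mul_nonsing_inv _ ((isUnit_iff_isUnit_det _).mp (isUnit_ridgeMatrix hγ.le)), one_mulVec]
  constructor
  · exact ⟨fun j ↦ if j ∈ S then γ * (v j ⬝ᵥ u) else 0, fun j hj ↦ if_neg hj,
      ridgeObjective_eq_half_dotProduct hγ.ne' hu fun j hj ↦ if_pos hj⟩
  · rintro _ ⟨w, -, rfl⟩
    exact half_dotProduct_le_ridgeObjective hγ hu w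

end Field

end Ridge

/-- the minimum of the ridge objective over vectors supported on `S`
equals `(1/2) Yᵀ (I_n + γ Σ_{j∈S} v_j v_jᵀ)⁻¹ Y`. -/
theorem ridge_min_value_support (n : ℕ) (hn : 0 < n) (Y : Fin n → ℝ) (γ : ℝ) (hγ : 0 < γ)
    (f : ℕ) (hf : 0 < f) (v : Fin f → Fin n → ℝ) (S : Finset (Fin f)) :
    ∃ wopt : Fin f → ℝ, (∀ j ∉ S, wopt j = 0) ∧
      (∀ w : Fin f → ℝ, (∀ j ∉ S, w j = 0) →
        (1/2) * ((Y - ∑ j ∈ S, wopt j • v j) ⬝ᵥ (Y - ∑ j ∈ S, wopt j • v j)) +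
          (1/(2*γ)) * ∑ j ∈ S, (wopt j)^2 ≤
        (1/2) * ((Y - ∑ j ∈ S, w j • v j) ⬝ᵥ (Y - ∑ j ∈ S, w j • v j)) +
          (1/(2*γ)) * ∑ j ∈ S, (w j)^2) ∧
      (1/2) * ((Y - ∑ j ∈ S, wopt j • v j) ⬝ᵥ (Y - ∑ j ∈ S, wopt j • v j)) +
          (1/(2*γ)) * ∑ j ∈ S, (wopt j)^2 =
        (1/2) * (Y ⬝ᵥ ((1 + γ • ∑ j ∈ S, vecMulVec (v j) (v j))⁻¹.mulVec Y)) := by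
  obtain ⟨⟨w, hw, hval⟩, hmin⟩ := ridge_min_value_support_general v hγ Y S
  exact ⟨w, hw, fun w' hw' ↦ hval.trans_le (hmin ⟨w', hw', rfl⟩), hval⟩
end

section
/- Let n, p, r be positive integers, let x₁, …, x_n ∈ ℝ^p be data points, let γ be a real number, let a ∈ ℝ^n, and fix an input index i ∈ {1,…,p}. For each multi-index α with |α| ≤ r define c_α := r! / ((r − |α|)! · Π_j (α_j)!) and define the coefficient w_α := γ · Σ_{t=1}^n a_t · √(c_α) · Π_{j=1}^p (x_{t,j})^{α_j}. Then the sum of squares of the coefficients of all monomials depending on input i satisfies Σ_{α : |α| ≤ r, α_i > 0} (w_α)² = γ² · Σ_{t=1}^n Σ_{t'=1}^n a_t a_{t'} · [ (1 + x_tᵀ x_{t'})^r − (1 + x_tᵀ x_{t'} − x_{t,i} x_{t',i})^r ]. -/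
/-!
The weights `c_α` are the coefficients of `(1 + ∑ j, y j) ^ r`, so the kernel `(1 + z ⬝ z') ^ r` is
the sum of `m_α(z) m_α(z')` over all multi-indices of degree at most `r`. Omitting the inputs in a
set `u` from the inner product keeps exactly the monomials not involving `u`, so the difference of
the two kernels is the part of that sum over the monomials that do; expanding the squares gives the
corresponding quadratic form in `a`.
-/

open Finset Nat

section MultiIndex

variable {ι : Type*}

/-- The coefficient `c_α = r! / ((r - |α|)! ∏ j, (α j)!)` of the monomial `α` in the `r`-th power of
`1 + ∑ j ∈ s, y j`. The subtraction is truncated, so the value is meaningful only for `|α| ≤ r`;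
the division is then exact. -/
def monomialWeight (s : Finset ι) (r : ℕ) (α : ι → ℕ) : ℕ :=
  r ! / ((r - ∑ j ∈ s, α j)! * ∏ j ∈ s, (α j)!)

theorem monomialWeight_eq_choose_mul_multinomial {s : Finset ι} {r : ℕ} {α : ι → ℕ}
    (h : ∑ j ∈ s, α j ≤ r) :
    monomialWeight s r α = r.choose (∑ j ∈ s, α j) * multinomial s α := by
  have hpos : 0 < (r - ∑ j ∈ s, α j)! * ∏ j ∈ s, (α j)! := by positivity
  refine Nat.div_eq_of_eq_mul_left hpos ?_
  rw [← choose_mul_factorial_mul_factorial h, ← multinomial_spec s α]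
  ring

theorem monomialWeight_mul_prod_of_subset {R : Type*} [CommSemiring R] {s t : Finset ι}
    (hst : s ⊆ t) {α : ι → ℕ} (hα : ∀ j, α j ≠ 0 → j ∈ s) (r : ℕ) (y : ι → R) :
    (monomialWeight s r α : R) * ∏ j ∈ s, y j ^ α j =
      monomialWeight t r α * ∏ j ∈ t, y j ^ α j := by
  have hzero (j : ι) (_ : j ∈ t) (hj : j ∉ s) : α j = 0 := by_contra fun h ↦ hj (hα j h)
  have hsum : ∑ j ∈ s, α j = ∑ j ∈ t, α j := sum_subset hst hzero
  have hfactorial : ∏ j ∈ s, (α j)! = ∏ j ∈ t, (α j)! :=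
    prod_subset hst fun j hjt hjs ↦ by simp [hzero j hjt hjs]
  have hmonomial : ∏ j ∈ s, y j ^ α j = ∏ j ∈ t, y j ^ α j :=
    prod_subset hst fun j hjt hjs ↦ by simp [hzero j hjt hjs]
  rw [monomialWeight, monomialWeight, hsum, hfactorial, hmonomial]

variable [DecidableEq ι]

theorem pairwiseDisjoint_piAntidiag {μ : Type*} [AddCommMonoid μ] [HasAntidiagonal μ]
    [DecidableEq μ] (s : Finset ι) (I : Set μ) : I.PairwiseDisjoint (piAntidiag s) :=
  fun _ _ _ _ hne ↦ disjoint_left.2 fun _ hf hf' ↦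
    hne ((mem_piAntidiag.1 hf).1.symm.trans (mem_piAntidiag.1 hf').1)

/-- The multi-indices `α` supported in `s` with total degree `|α| ≤ r`, as functions `ι → ℕ`; they
index the monomials of degree at most `r` in the inputs `s`. -/
def multiIndicesLE (s : Finset ι) (r : ℕ) : Finset (ι → ℕ) :=
  (range (r + 1)).disjiUnion (piAntidiag s) (pairwiseDisjoint_piAntidiag s _)

theorem mem_multiIndicesLE {s : Finset ι} {r : ℕ} {α : ι → ℕ} :
    α ∈ multiIndicesLE s r ↔ ∑ j ∈ s, α j ≤ r ∧ ∀ j, α j ≠ 0 → j ∈ s := by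
  simp [multiIndicesLE]

theorem multiIndicesLE_univ [Fintype ι] (r : ℕ) :
    multiIndicesLE (univ : Finset ι) r =
      {α ∈ Fintype.piFinset fun _ : ι ↦ range (r + 1) | ∑ j, α j ≤ r} := by
  ext α
  have le_of_sum_le (h : ∑ j, α j ≤ r) (j : ι) : α j < r + 1 :=
    Nat.lt_succ_of_le ((single_le_sum_of_canonicallyOrdered (mem_univ j)).trans h)
  simpa [mem_multiIndicesLE] using le_of_sum_le

theorem filter_multiIndicesLE_forall_eq_zero (s u : Finset ι) (r : ℕ) :
    {α ∈ multiIndicesLE s r | ∀ j ∈ u, α j = 0} = multiIndicesLE (s \ u) r := by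
  ext α
  simp only [mem_filter, mem_multiIndicesLE, mem_sdiff]
  constructor
  · rintro ⟨⟨hdeg, hsupp⟩, hu⟩
    exact ⟨(sum_le_sum_of_subset sdiff_subset).trans hdeg,
      fun j hj ↦ ⟨hsupp j hj, fun hju ↦ hj (hu j hju)⟩⟩
  · rintro ⟨hdeg, hsupp⟩
    have hsum : ∑ j ∈ s \ u, α j = ∑ j ∈ s, α j :=
      sum_subset sdiff_subset fun j _ hj ↦ by_contra fun h ↦ hj (mem_sdiff.2 (hsupp j h))
    exact ⟨⟨hsum ▸ hdeg, fun j hj ↦ (hsupp j hj).1⟩,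
      fun j hju ↦ by_contra fun h ↦ (hsupp j h).2 hju⟩

theorem one_add_sum_pow {R : Type*} [CommSemiring R] (s : Finset ι) (r : ℕ) (y : ι → R) :
    (1 + ∑ j ∈ s, y j) ^ r =
      ∑ α ∈ multiIndicesLE s r, (monomialWeight s r α : R) * ∏ j ∈ s, y j ^ α j := by
  rw [add_comm, add_pow, multiIndicesLE, sum_disjiUnion]
  refine sum_congr rfl fun d hd ↦ ?_
  rw [one_pow, mul_one, sum_pow_eq_sum_piAntidiag, sum_mul]
  refine sum_congr rfl fun α hα ↦ ?_
  obtain ⟨rfl, -⟩ := mem_piAntidiag.1 hα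
  rw [monomialWeight_eq_choose_mul_multinomial (mem_range_succ_iff.1 hd), Nat.cast_mul]
  ring

theorem one_add_sum_pow_sub_one_add_sum_sdiff_pow {R : Type*} [CommRing R]
    (s u : Finset ι) (r : ℕ) (y : ι → R) :
    (1 + ∑ j ∈ s, y j) ^ r - (1 + ∑ j ∈ s \ u, y j) ^ r =
      ∑ α ∈ multiIndicesLE s r with ∃ j ∈ u, 0 < α j,
        (monomialWeight s r α : R) * ∏ j ∈ s, y j ^ α j := by
  have hsdiff : (1 + ∑ j ∈ s \ u, y j) ^ r =
      ∑ α ∈ multiIndicesLE s r with ∀ j ∈ u, α j = 0,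
        (monomialWeight s r α : R) * ∏ j ∈ s, y j ^ α j := by
    rw [one_add_sum_pow, filter_multiIndicesLE_forall_eq_zero]
    exact sum_congr rfl fun α hα ↦
      monomialWeight_mul_prod_of_subset sdiff_subset (mem_multiIndicesLE.1 hα).2 r y
  rw [hsdiff, one_add_sum_pow s, sub_eq_iff_eq_add',
    ← sum_filter_add_sum_filter_not (multiIndicesLE s r) fun α ↦ ∀ j ∈ u, α j = 0]
  simp only [not_forall, exists_prop, Nat.pos_iff_ne_zero]

end MultiIndex

theorem sum_sq_mul_sum_mul {R κ τ : Type*} [CommSemiring R] (S : Finset κ) (T : Finset τ)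
    (γ : R) (a : τ → R) (f : κ → τ → R) :
    ∑ k ∈ S, (γ * ∑ t ∈ T, a t * f k t) ^ 2 =
      γ ^ 2 * ∑ t ∈ T, ∑ t' ∈ T, a t * a t' * ∑ k ∈ S, f k t * f k t' := by
  simp only [mul_pow, ← mul_sum]
  congr 1
  calc ∑ k ∈ S, (∑ t ∈ T, a t * f k t) ^ 2
      = ∑ k ∈ S, ∑ t ∈ T, ∑ t' ∈ T, a t * a t' * (f k t * f k t') := by
        simp only [sq, sum_mul_sum, mul_mul_mul_comm]
    _ = ∑ t ∈ T, ∑ t' ∈ T, a t * a t' * ∑ k ∈ S, f k t * f k t' := by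
        rw [sum_comm]
        simp only [sum_comm (s := S), mul_sum]

section ScaledMonomial

variable {ι : Type*} [Fintype ι]

/-- The scaled monomial `m_α(z) = √c_α ∏ j, z j ^ α j`, a coordinate of the feature map of the
polynomial kernel `(1 + z ⬝ z') ^ r`. -/
noncomputable def scaledMonomial (r : ℕ) (α : ι → ℕ) (z : ι → ℝ) : ℝ :=
  √(monomialWeight univ r α) * ∏ j, z j ^ α j

theorem scaledMonomial_mul_scaledMonomial (r : ℕ) (α : ι → ℕ) (z z' : ι → ℝ) :
    scaledMonomial r α z * scaledMonomial r α z' =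
      monomialWeight univ r α * ∏ j, (z j * z' j) ^ α j := by
  simp only [scaledMonomial, mul_pow, prod_mul_distrib]
  rw [mul_mul_mul_comm, Real.mul_self_sqrt (Nat.cast_nonneg _)]

theorem input_coefficient_norm_general [DecidableEq ι] {τ : Type*} [Fintype τ] (r : ℕ)
    (x : τ → ι → ℝ) (γ : ℝ) (a : τ → ℝ) (u : Finset ι) :
    ∑ α ∈ multiIndicesLE univ r with ∃ j ∈ u, 0 < α j,
        (γ * ∑ t, a t * scaledMonomial r α (x t)) ^ 2 =
      γ ^ 2 * ∑ t, ∑ t', a t * a t' *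
        ((1 + ∑ j, x t j * x t' j) ^ r - (1 + ∑ j ∈ univ \ u, x t j * x t' j) ^ r) := by
  simp only [sum_sq_mul_sum_mul, scaledMonomial_mul_scaledMonomial,
    one_add_sum_pow_sub_one_add_sum_sdiff_pow]

end ScaledMonomial

/-- the sum of squares of the ridge coefficients (obtained through the
complementarity relation `w = γ m(X)ᵀ a`) of all monomials depending on input `i`
can be computed via the kernel matrices:
`Σ_{|α| ≤ r, α_i > 0} w_α² = γ² Σ_t Σ_t' a_t a_t' [(1 + x_tᵀx_t')^r − (1 + x_tᵀx_t' − x_{t,i}x_{t',i})^r]`. -/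
theorem input_coefficient_norm (n p r : ℕ) (hn : 0 < n) (hp : 0 < p) (hr : 0 < r)
    (x : Fin n → Fin p → ℝ) (γ : ℝ) (a : Fin n → ℝ) (i : Fin p) :
    ∑ α ∈ ((Fintype.piFinset fun _ : Fin p => Finset.range (r + 1)).filter
        (fun α : Fin p → ℕ => ∑ j, α j ≤ r ∧ 0 < α i)),
      (γ * ∑ t, a t *
          Real.sqrt ((r.factorial / ((r - ∑ j, α j).factorial * ∏ j, (α j).factorial) : ℕ)) *
          ∏ j, (x t j) ^ α j) ^ 2
      = γ ^ 2 * ∑ t, ∑ t', a t * a t' *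
          ((1 + ∑ j, x t j * x t' j) ^ r -
           (1 + (∑ j, x t j * x t' j) - x t i * x t' i) ^ r) := by
  have hdot (t t' : Fin n) : 1 + (∑ j, x t j * x t' j) - x t i * x t' i =
      1 + ∑ j ∈ univ \ {i}, x t j * x t' j := by
    rw [sum_sdiff_eq_sub (subset_univ _), sum_singleton, add_sub_assoc]
  simpa only [hdot, multiIndicesLE_univ, filter_filter, mem_singleton, exists_eq_left,
    scaledMonomial, monomialWeight, mul_assoc] using input_coefficient_norm_general r x γ a {i}
end

section
/- Let n be a positive integer, let Y ∈ ℝ^n, let γ > 0, and let K, K̄ ∈ ℝ^{n×n} be symmetric positive semidefinite matrices. Define c(M) := (1/2) Yᵀ (I_n + γ M)⁻¹ Y and let α⋆ := (I_n + γ K)⁻¹ Y. Then c(K̄) ≥ c(K) − (γ/2) · α⋆ᵀ (K̄ − K) α⋆. In other words, the map M ↦ −(γ/2) α⋆ᵀ M α⋆ (up to the affine offset) is a subgradient linearization of c at K: the affine function M ↦ c(K) − (γ/2) α⋆ᵀ(M − K)α⋆ underestimates c on the positive semidefinite cone and is tight at K. -/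
open Matrix

/-!
The loss `c(M)` is the maximum over `α` of a dual objective that is affine in `M`; weak duality is
completing the square. The maximizer `α⋆` for `K` is a competitor for `K̄`, so `c(K̄)` is at least the
dual objective for `K̄` at `α⋆`, which differs from `c(K)` by exactly `(γ/2) α⋆ᵀ (K̄ - K) α⋆`.
-/

section DualObjective

variable {ι R : Type*} [Fintype ι] [CommRing R] [StarRing R]

/-- The concave quadratic dual to `y ↦ yᴴ A⁻¹ y`, namely `α ↦ αᴴ y + yᴴ α - αᴴ A α`. For real
entries and `A = I + γ K` it is twice the dual objective of kernel ridge regression; leaving out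
the factor `1/2` avoids division in `R`. -/
def dualObjective (A : Matrix ι ι R) (y α : ι → R) : R :=
  star α ⬝ᵥ y + star y ⬝ᵥ α - star α ⬝ᵥ A *ᵥ α

lemma dualObjective_sub_dualObjective (A B : Matrix ι ι R) (y α : ι → R) :
    dualObjective A y α - dualObjective B y α = star α ⬝ᵥ (B - A) *ᵥ α := by
  simp only [dualObjective, sub_mulVec, dotProduct_sub]
  ring

lemma dualObjective_mulVec_self (A : Matrix ι ι R) (β : ι → R) :
    dualObjective A (A *ᵥ β) β = star (A *ᵥ β) ⬝ᵥ β := by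
  simp only [dualObjective, add_sub_cancel_left]

lemma star_mulVec_dotProduct_sub_dualObjective {A : Matrix ι ι R}
    (hA : A.IsHermitian) (β α : ι → R) :
    star (A *ᵥ β) ⬝ᵥ β - dualObjective A (A *ᵥ β) α = star (β - α) ⬝ᵥ A *ᵥ (β - α) := by
  have adjoint (v : ι → R) : star (A *ᵥ β) ⬝ᵥ v = star β ⬝ᵥ A *ᵥ v := by
    rw [star_mulVec, hA.eq, dotProduct_mulVec]
  simp only [dualObjective, adjoint, star_sub, mulVec_sub, sub_dotProduct, dotProduct_sub]
  ring

variable [PartialOrder R] [AddLeftMono R]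

lemma dualObjective_mulVec_le {A : Matrix ι ι R} (hA : A.PosSemidef) (β α : ι → R) :
    dualObjective A (A *ᵥ β) α ≤ star (A *ᵥ β) ⬝ᵥ β := by
  rw [← sub_nonneg, star_mulVec_dotProduct_sub_dualObjective hA.isHermitian]
  exact hA.dotProduct_mulVec_nonneg (β - α)

end DualObjective

section InverseQuadraticForm

variable {ι R : Type*} [Fintype ι] [DecidableEq ι] [CommRing R]

lemma mulVec_inv_mulVec {A : Matrix ι ι R} (hA : IsUnit A) (y : ι → R) :
    A *ᵥ (A⁻¹ *ᵥ y) = y := by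
  rw [mulVec_mulVec, mul_nonsing_inv A ((isUnit_iff_isUnit_det A).mp hA), one_mulVec]

theorem star_dotProduct_inv_mulVec_sub_le [StarRing R] [PartialOrder R] [AddLeftMono R]
    {A B : Matrix ι ι R} (hA : IsUnit A) (hB : B.PosSemidef) (hB_unit : IsUnit B) (y : ι → R) :
    star y ⬝ᵥ A⁻¹ *ᵥ y - star (A⁻¹ *ᵥ y) ⬝ᵥ (B - A) *ᵥ (A⁻¹ *ᵥ y) ≤ star y ⬝ᵥ B⁻¹ *ᵥ y := by
  have attained : dualObjective A y (A⁻¹ *ᵥ y) = star y ⬝ᵥ A⁻¹ *ᵥ y := by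
    simpa only [mulVec_inv_mulVec hA] using dualObjective_mulVec_self A (A⁻¹ *ᵥ y)
  have weak_duality : dualObjective B y (A⁻¹ *ᵥ y) ≤ star y ⬝ᵥ B⁻¹ *ᵥ y := by
    simpa only [mulVec_inv_mulVec hB_unit] using dualObjective_mulVec_le hB (B⁻¹ *ᵥ y) (A⁻¹ *ᵥ y)
  rwa [← attained, ← dualObjective_sub_dualObjective A B y, sub_sub_cancel]

end InverseQuadraticForm

lemma posDef_one_add_smul {ι R : Type*} [DecidableEq ι] [CommRing R] [PartialOrder R]
    [StarRing R] [StarOrderedRing R] [NoZeroDivisors R] {γ : R} (hγ : 0 ≤ γ) {M : Matrix ι ι R}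
    (hM : M.PosSemidef) : (1 + γ • M).PosDef :=
  PosDef.one.add_posSemidef (hM.smul hγ)

theorem regression_loss_subgradient_general {ι R : Type*} [Fintype ι] [DecidableEq ι] [Field R]
    [PartialOrder R] [IsStrictOrderedRing R] [PosMulReflectLT R] [StarRing R] (Y : ι → R) (γ : R)
    {K Kbar : Matrix ι ι R} (hK : IsUnit (1 + γ • K)) (hKbar : (1 + γ • Kbar).PosDef) :
    (1/2) * (star Y ⬝ᵥ (1 + γ • K)⁻¹ *ᵥ Y) -
        (γ/2) * (star ((1 + γ • K)⁻¹ *ᵥ Y) ⬝ᵥ (Kbar - K) *ᵥ ((1 + γ • K)⁻¹ *ᵥ Y)) ≤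
      (1/2) * (star Y ⬝ᵥ (1 + γ • Kbar)⁻¹ *ᵥ Y) := by
  have halved := mul_le_mul_of_nonneg_left
    (star_dotProduct_inv_mulVec_sub_le hK hKbar.posSemidef hKbar.isUnit Y) one_half_pos.le
  rw [add_sub_add_left_eq_sub, ← smul_sub, smul_mulVec, dotProduct_smul, smul_eq_mul] at halved
  convert halved using 1
  ring

/-- subgradient inequality for the regression loss
`c(M) = (1/2) Yᵀ (I_n + γ M)⁻¹ Y`: with `α⋆ = (I_n + γ K)⁻¹ Y`, for every positive
semidefinite `K̄` one has `c(K̄) ≥ c(K) − (γ/2) α⋆ᵀ (K̄ − K) α⋆`. -/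
theorem regression_loss_subgradient (n : ℕ) (hn : 0 < n) (Y : Fin n → ℝ)
    (γ : ℝ) (hγ : 0 < γ) (K Kbar : Matrix (Fin n) (Fin n) ℝ)
    (hK : K.PosSemidef) (hKbar : Kbar.PosSemidef) :
    (1/2) * (Y ⬝ᵥ ((1 + γ • Kbar)⁻¹.mulVec Y)) ≥
      (1/2) * (Y ⬝ᵥ ((1 + γ • K)⁻¹.mulVec Y)) -
      (γ/2) * (((1 + γ • K)⁻¹.mulVec Y) ⬝ᵥ (Kbar - K).mulVec ((1 + γ • K)⁻¹.mulVec Y)) := by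
  simpa only [star_trivial] using regression_loss_subgradient_general Y γ
    (posDef_one_add_smul hγ.le hK).isUnit (posDef_one_add_smul hγ.le hKbar)
end
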